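/- The weight-two modular form 𝒫̃ on Γ₀(2) satisfies the third-order nonlinear ODE: for every τ ∈ ℍ, 3𝒫̃²(𝒫̃''')² − 36(𝒫̃𝒫̃'𝒫̃'' − (𝒫̃')³)𝒫̃''' + 32𝒫̃(𝒫̃'')³ − 3(12(𝒫̃')² + 𝒫̃⁴)(𝒫̃'')² + 9𝒫̃³(𝒫̃')²𝒫̃'' − (27/4)𝒫̃²(𝒫̃')⁴ = 0. -/

import Mathlib

open Complex

noncomputable section

/-- The normalized derivative `F' = (2πi)⁻¹ dF/dτ`. -/
def nderiv (F : ℂ → ℂ) : ℂ → ℂ := fun τ => (2 * Real.pi * Complex.I)⁻¹ * deriv F τ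

/-- `q = e^{2πiτ}`. -/
def qq (τ : ℂ) : ℂ := Complex.exp (2 * Real.pi * Complex.I * τ)

/-- The level-two modular form `𝒫̃(τ) = 1 + 24 Σ_{n≥1} n qⁿ/(1+qⁿ)`. -/
def EPt : ℂ → ℂ := fun τ =>
  1 + 24 * ∑' n : ℕ, ((n : ℂ) + 1) * qq τ ^ (n + 1) / (1 + qq τ ^ (n + 1))

/-! Let `g` run through the three upper triangular integral matrices of determinant `2`. The
functions `a_g = E₂ ∣[2] g - E₂` are holomorphic and permuted by `SL(2, ℤ)`, hence their power
sums are modular forms of level one; comparing constant terms, they are the roots of the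
Weierstrass cubic `4 x³ - 3 E₄ x - E₆`. The Lambert series of `E₂` shows that `𝒫̃(τ) = 2 E₂(2τ) -
E₂(τ)` is one of them. Differentiating the cubic by Ramanujan's equations for `E₂`, `E₄`, `E₆`
yields `6 𝒫̃' = E₂ 𝒫̃ - 2 𝒫̃² + E₄`. Thus `𝒫̃` and all its derivatives are polynomials in `E₂`,
`E₄`, `𝒫̃`, and the differential equation is a polynomial identity in these three functions.
-/

section ThirdOrderODE

open UpperHalfPlane hiding I
open EisensteinSeries ModularForm Manifold Filter Topology MatrixGroups Derivative
open Function.Periodic (qParam norm_qParam)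

theorem tendsto_im_atImInfty : Tendsto UpperHalfPlane.im atImInfty atTop := tendsto_comap

theorem tendsto_atImInfty_of_hasSum_qExpansion {h : ℝ} (hh : 0 < h) {f : ℍ → ℂ} {c : ℕ → ℂ}
    (hf : ∀ τ : ℍ, HasSum (fun m ↦ c m • qParam h τ ^ m) (f τ)) :
    Tendsto f atImInfty (𝓝 (c 0)) := by
  have hterm (m : ℕ) : Tendsto (fun τ : ℍ ↦ c m • qParam h τ ^ m) atImInfty
      (𝓝 (if m = 0 then c 0 else 0)) := by
    simpa +contextual [zero_pow_eq, apply_ite] using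
      ((qParam_tendsto_atImInfty hh).pow m).const_smul (c m)
  have hbound : ∀ᶠ τ : ℍ in atImInfty, ∀ m,
      ‖c m • qParam h τ ^ m‖ ≤ ‖c m • qParam h UpperHalfPlane.I ^ m‖ := by
    filter_upwards [tendsto_im_atImInfty.eventually_ge_atTop 1] with τ hτ m
    have hnorm : ‖qParam h τ‖ ≤ ‖qParam h UpperHalfPlane.I‖ := by
      simp only [norm_qParam, Real.exp_le_exp, coe_im, UpperHalfPlane.I_im]
      gcongr ?_ / h
      nlinarith [Real.pi_pos]
    simp only [norm_smul, norm_pow]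
    gcongr
  have hlim := tendsto_tsum_of_dominated_convergence (hf UpperHalfPlane.I).summable.norm
    hterm hbound
  simpa only [(hf _).tsum_eq, tsum_ite_eq] using hlim

theorem tendsto_E2_atImInfty : Tendsto E2 atImInfty (𝓝 1) :=
  tendsto_atImInfty_of_hasSum_qExpansion one_pos
    (c := fun m ↦ if m = 0 then 1 else -24 * ArithmeticFunction.sigma 1 m) fun τ ↦ by
      simpa only [qParam, ofReal_one, div_one] using hasSum_qExpansion_E2 (z := τ)

theorem tendsto_E_atImInfty {k : ℕ} (hk : 3 ≤ k) (hk_even : Even k) :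
    Tendsto (E hk) atImInfty (𝓝 1) := by
  have hsum (τ : ℍ) := ModularForm.hasSum_qExpansion (E hk) one_pos one_mem_strictPeriods_SL τ
  simpa only [E_qExpansion_coeff_zero hk hk_even] using
    tendsto_atImInfty_of_hasSum_qExpansion one_pos hsum

theorem closedBall_half_im_subset (z : ℍ) :
    Metric.closedBall (z : ℂ) (z.im / 2) ⊆ {w | z.im / 2 ≤ w.im} := by
  intro w hw
  have him : |w.im - z.im| ≤ z.im / 2 := by
    simpa using (abs_im_le_norm (w - z)).trans (mem_closedBall_iff_norm.mp hw)
  change z.im / 2 ≤ w.im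
  linarith [(abs_le.mp him).1]

-- Cauchy's estimate on the disc of radius `im z / 2`.
theorem norm_normalizedDerivOfComplex_le {F : ℍ → ℂ} (hF : MDiff F) {A C : ℝ}
    (hC : ∀ z : ℍ, A ≤ z.im → ‖F z‖ ≤ C) {z : ℍ} (hz : 2 * A ≤ z.im) :
    ‖D F z‖ ≤ ‖(2 * Real.pi * I : ℂ)⁻¹‖ * (C / (z.im / 2)) := by
  have him_pos : ∀ w ∈ Metric.closedBall (z : ℂ) (z.im / 2), 0 < w.im := fun w hw ↦
    (half_pos z.im_pos).trans_le (closedBall_half_im_subset z hw)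
  rw [normalizedDerivOfComplex, norm_mul]
  gcongr
  refine Complex.norm_deriv_le_of_forall_mem_sphere_norm_le (half_pos z.im_pos)
    ((UpperHalfPlane.mdifferentiable_iff.mp hF).diffContOnCl_ball him_pos) fun w hw ↦ ?_
  have hw' := Metric.sphere_subset_closedBall hw
  have him : z.im / 2 ≤ w.im := closedBall_half_im_subset z hw'
  rw [Function.comp_apply, ofComplex_apply_of_im_pos (him_pos w hw')]
  exact hC ⟨w, him_pos w hw'⟩ (show A ≤ w.im by linarith)

theorem tendsto_normalizedDerivOfComplex_atImInfty {F : ℍ → ℂ} (hF : MDiff F)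
    (hF_bdd : IsBoundedAtImInfty F) : Tendsto (D F) atImInfty (𝓝 0) := by
  obtain ⟨C, A, hC⟩ := isBoundedAtImInfty_iff.mp hF_bdd
  have hlim : Tendsto (fun z : ℍ ↦ ‖(2 * Real.pi * I : ℂ)⁻¹‖ * (C / (z.im / 2)))
      atImInfty (𝓝 0) := by
    simpa using ((tendsto_im_atImInfty.atTop_div_const two_pos).const_div_atTop C).const_mul
      ‖(2 * Real.pi * I : ℂ)⁻¹‖
  refine squeeze_zero_norm' ?_ hlim
  filter_upwards [tendsto_im_atImInfty.eventually_ge_atTop (2 * A)] with z hz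
  exact norm_normalizedDerivOfComplex_le hF hC hz

theorem tendsto_serreDerivative_atImInfty (k : ℂ) {F : ℍ → ℂ} {c : ℂ} (hF : MDiff F)
    (hc : Tendsto F atImInfty (𝓝 c)) :
    Tendsto (serreDerivative k F) atImInfty (𝓝 (-(k * c / 12))) := by
  have hlim := (tendsto_normalizedDerivOfComplex_atImInfty hF (hc.isBigO_one ℝ)).sub
    ((tendsto_E2_atImInfty.const_mul (k * 12⁻¹)).mul hc)
  rwa [zero_sub, mul_one, mul_right_comm, ← div_eq_mul_inv] at hlim

/-- `F` is a modular form of weight `k` and level one with constant term `c` at `i∞`. Unlike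
`ModularForm 𝒮ℒ k` this is a predicate on functions, so that forms of weight `k` can be compared
without transporting along equalities of weights. -/
structure IsLevelOneForm (k : ℤ) (c : ℂ) (F : ℍ → ℂ) : Prop where
  mdifferentiable : MDiff F
  slash_eq (γ : SL(2, ℤ)) : F ∣[k] γ = F
  tendsto : Tendsto F atImInfty (𝓝 c)

namespace IsLevelOneForm

variable {k l : ℤ} {c d : ℂ} {F G : ℍ → ℂ}

theorem of_S_T (hF : MDiff F) (hS : F ∣[k] ModularGroup.S = F) (hT : F ∣[k] ModularGroup.T = F)
    (hc : Tendsto F atImInfty (𝓝 c)) : IsLevelOneForm k c F :=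
  ⟨hF, SlashInvariantForm.slash_action_generators_SL2Z hS hT, hc⟩

theorem add (hF : IsLevelOneForm k c F) (hG : IsLevelOneForm k d G) :
    IsLevelOneForm k (c + d) (F + G) where
  mdifferentiable := hF.mdifferentiable.add hG.mdifferentiable
  slash_eq γ := by rw [SlashAction.add_slash, hF.slash_eq, hG.slash_eq]
  tendsto := hF.tendsto.add hG.tendsto

theorem const_smul (a : ℂ) (hF : IsLevelOneForm k c F) : IsLevelOneForm k (a * c) (a • F) where
  mdifferentiable := hF.mdifferentiable.const_smul a
  slash_eq γ := by rw [SL_smul_slash, hF.slash_eq]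
  tendsto := hF.tendsto.const_smul a

theorem mul (hF : IsLevelOneForm k c F) (hG : IsLevelOneForm l d G) :
    IsLevelOneForm (k + l) (c * d) (F * G) where
  mdifferentiable := hF.mdifferentiable.mul hG.mdifferentiable
  slash_eq γ := by rw [mul_slash_SL2, hF.slash_eq, hG.slash_eq]
  tendsto := hF.tendsto.mul hG.tendsto

theorem serreDerivative (hF : IsLevelOneForm k c F) :
    IsLevelOneForm (k + 2) (-(k * c / 12)) (Derivative.serreDerivative k F) where
  mdifferentiable := serreDerivative_mdifferentiable k hF.mdifferentiable
  slash_eq γ := serreDerivative_slash_invariant hF.mdifferentiable (hF.slash_eq γ)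
  tendsto := tendsto_serreDerivative_atImInfty k hF.mdifferentiable hF.tendsto

theorem eq_zero_of_weight_lt_twelve (hF : IsLevelOneForm k 0 F) (hk : k < 12) : F = 0 := by
  let f : CuspForm 𝒮ℒ k :=
    { toFun := F
      slash_action_eq' := fun _ ⟨γ, hγ⟩ ↦ hγ ▸ hF.slash_eq γ
      holo' := hF.mdifferentiable
      zero_at_cusps' hc := by
        rw [Subgroup.IsArithmetic.isCusp_iff_isCusp_SL2Z] at hc
        rw [OnePoint.isZeroAt_iff_forall_SL2Z hc]
        intro γ _
        rw [hF.slash_eq]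
        exact hF.tendsto }
  exact congrArg DFunLike.coe
    (rank_zero_iff_forall_zero.mp (CuspForm.rank_eq_zero_of_weight_lt_twelve hk) f)

theorem eq_of_weight_lt_twelve (hF : IsLevelOneForm k c F) (hG : IsLevelOneForm k d G)
    (hk : k < 12) (hcd : c = d) : F = G := by
  have hsub := hF.add (hG.const_smul (-1))
  rw [hcd, neg_one_mul, add_neg_cancel] at hsub
  simpa [add_neg_eq_zero] using hsub.eq_zero_of_weight_lt_twelve hk

end IsLevelOneForm

theorem isLevelOneForm_E {k : ℕ} (hk : 3 ≤ k) (hk_even : Even k) : IsLevelOneForm k 1 (E hk) where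
  mdifferentiable := ModularFormClass.holo (E hk)
  slash_eq γ := SlashInvariantFormClass.slash_action_eq (E hk) _ ⟨γ, rfl⟩
  tendsto := tendsto_E_atImInfty hk hk_even

theorem isLevelOneForm_E₄ : IsLevelOneForm 4 1 E₄ := isLevelOneForm_E _ ⟨2, rfl⟩

theorem isLevelOneForm_E₆ : IsLevelOneForm 6 1 E₆ := isLevelOneForm_E _ ⟨3, rfl⟩

theorem normalizedDerivOfComplex_E₄ : D E₄ = (3⁻¹ : ℂ) • (E2 * E₄ - E₆) := by
  have hserre := isLevelOneForm_E₄.serreDerivative.eq_of_weight_lt_twelve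
    (isLevelOneForm_E₆.const_smul (-3⁻¹)) (by norm_num) (by norm_num)
  ext z
  have hz := congrFun hserre z
  simp only [serreDerivative_apply, Pi.smul_apply, Pi.mul_apply, Pi.sub_apply, smul_eq_mul] at hz ⊢
  linear_combination hz

theorem normalizedDerivOfComplex_E₆ : D E₆ = (2⁻¹ : ℂ) • (E2 * E₆ - E₄ ^ 2) := by
  have hserre := isLevelOneForm_E₆.serreDerivative.eq_of_weight_lt_twelve
    ((isLevelOneForm_E₄.mul isLevelOneForm_E₄).const_smul (-2⁻¹)) (by norm_num) (by norm_num)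
  ext z
  have hz := congrFun hserre z
  simp only [serreDerivative_apply, Pi.smul_apply, Pi.mul_apply, Pi.sub_apply, Pi.pow_apply,
    smul_eq_mul] at hz ⊢
  linear_combination hz

theorem D2_eq_smul_one_slash (γ : SL(2, ℤ)) :
    D2 γ = (2 * Real.pi * I * γ 1 0) • ((1 : ℍ → ℂ) ∣[(1 : ℤ)] γ) := by
  ext z
  simp [D2, SL_slash_apply, div_eq_mul_inv]

theorem mdifferentiable_D2 (γ : SL(2, ℤ)) : MDiff (D2 γ) := by
  rw [D2_eq_smul_one_slash]
  exact (MDifferentiable.slash mdifferentiable_const _ _).const_smul _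

theorem normalizedDerivOfComplex_slash_SL {k : ℤ} {F : ℍ → ℂ} (hF : MDiff F) (γ : SL(2, ℤ)) :
    D F ∣[k + 2] γ = D (F ∣[k] γ) - (k / (4 * Real.pi ^ 2) : ℂ) • (D2 γ * F ∣[k] γ) := by
  rw [normalizedDerivOfComplex_SL_slash hF]
  ext z
  simp only [Pi.sub_apply, Pi.smul_apply, Pi.mul_apply, D2, smul_eq_mul]
  field_simp
  linear_combination (4 * k * γ 1 0 * (F ∣[k] γ) z) * I_sq

theorem normalizedDerivOfComplex_D2 (γ : SL(2, ℤ)) :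
    D (D2 γ) = (4 * Real.pi ^ 2 : ℂ)⁻¹ • D2 γ ^ 2 := by
  have hone : MDiff (1 : ℍ → ℂ) := mdifferentiable_const
  have hD_one : D (1 : ℍ → ℂ) = 0 := normalizedDerivOfComplex_const 1
  have hD_slash := normalizedDerivOfComplex_slash_SL (k := 1) hone γ
  rw [hD_one, SlashAction.zero_slash, eq_comm, sub_eq_zero] at hD_slash
  have hD_smul := normalizedDerivOfComplex_smul (2 * Real.pi * I * γ 1 0) _
    (MDifferentiable.slash hone 1 (γ : GL (Fin 2) ℝ))
  rw [← SL_slash, ← D2_eq_smul_one_slash, hD_slash, smul_comm, ← mul_smul_comm,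
    ← D2_eq_smul_one_slash] at hD_smul
  simpa [sq] using hD_smul

theorem serreDerivative_one_E2_slash (γ : SL(2, ℤ)) :
    serreDerivative 1 E2 ∣[(4 : ℤ)] γ = serreDerivative 1 E2 := by
  have hserre : serreDerivative 1 E2 = D E2 + (-12⁻¹ : ℂ) • (E2 * E2) := by
    ext z
    simp only [serreDerivative_apply, Pi.add_apply, Pi.smul_apply, Pi.mul_apply, smul_eq_mul]
    ring
  have hE2_sq : (E2 * E2) ∣[(4 : ℤ)] γ = E2 ∣[(2 : ℤ)] γ * E2 ∣[(2 : ℤ)] γ :=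
    mul_slash_SL2 2 2 γ E2 E2
  have hDE2 : D E2 ∣[(4 : ℤ)] γ = _ :=
    normalizedDerivOfComplex_slash_SL (k := 2) E2_mdifferentiable γ
  have hD2 := mdifferentiable_D2 γ
  rw [hserre, SlashAction.add_slash, SL_smul_slash, hE2_sq, hDE2, E2_slash_action,
    normalizedDerivOfComplex_sub _ _ E2_mdifferentiable (hD2.const_smul _),
    normalizedDerivOfComplex_smul _ _ hD2, normalizedDerivOfComplex_D2]
  ext z
  simp only [Pi.add_apply, Pi.sub_apply, Pi.smul_apply, Pi.mul_apply, Pi.pow_apply, smul_eq_mul,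
    riemannZeta_two]
  field_simp
  push_cast
  ring

theorem isLevelOneForm_serreDerivative_one_E2 :
    IsLevelOneForm 4 (-12⁻¹) (serreDerivative 1 E2) where
  mdifferentiable := serreDerivative_mdifferentiable 1 E2_mdifferentiable
  slash_eq := serreDerivative_one_E2_slash
  tendsto := by
    simpa using tendsto_serreDerivative_atImInfty 1 E2_mdifferentiable tendsto_E2_atImInfty

theorem normalizedDerivOfComplex_E2 : D E2 = (12⁻¹ : ℂ) • (E2 ^ 2 - E₄) := by
  have hserre := isLevelOneForm_serreDerivative_one_E2.eq_of_weight_lt_twelve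
    (isLevelOneForm_E₄.const_smul (-12⁻¹)) (by norm_num) (by norm_num)
  ext z
  have hz := congrFun hserre z
  simp only [serreDerivative_apply, Pi.smul_apply, Pi.sub_apply, Pi.pow_apply, smul_eq_mul] at hz ⊢
  linear_combination hz

theorem σ_of_det_pos {g : GL (Fin 2) ℝ} (hg : 0 < g.det.val) :
    σ g = ContinuousAlgEquiv.refl ℝ ℂ := if_pos hg

theorem slash_apply_of_det_pos {g : GL (Fin 2) ℝ} (hg : 0 < g.det.val) (k : ℤ) (F : ℍ → ℂ)
    (z : ℍ) :
    (F ∣[k] g) z = F (g • z) * (g.det.val : ℂ) ^ (k - 1) * denom g z ^ (-k) := by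
  rw [slash_def, σ_of_det_pos hg, abs_of_pos hg]
  rfl

theorem denom_of_lower_left_eq_zero {g : GL (Fin 2) ℝ} (hg : g 1 0 = 0) (z : ℂ) :
    denom g z = g 1 1 := by
  simp [denom, hg]

theorem D2_slash_of_mul_eq_mul {g g' : GL (Fin 2) ℝ} {γ γ' : SL(2, ℤ)}
    (h : g * (γ : GL (Fin 2) ℝ) = (γ' : GL (Fin 2) ℝ) * g') (hg : g 1 0 = 0) (hg' : g' 1 0 = 0)
    (hdet : 0 < g'.det.val) : D2 γ' ∣[(2 : ℤ)] g' = D2 γ := by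
  have hentry : (γ' 1 0 * g' 0 0 : ℂ) = g 1 1 * γ 1 0 := by
    have hreal : γ' 1 0 * g' 0 0 = g 1 1 * γ 1 0 := by
      simpa [Matrix.mul_apply, Fin.sum_univ_two, hg, hg', eq_comm] using
        congrArg (fun m : GL (Fin 2) ℝ ↦ m 1 0) h
    exact_mod_cast hreal
  have hdet' : g'.det.val = g' 0 0 * g' 1 1 := by simp [Matrix.det_fin_two, hg']
  ext z
  have hdenom : (g 1 1 : ℂ) * denom γ z = denom γ' ↑(g' • z) * g' 1 1 := by
    have hcocycle := congrArg (denom · (z : ℂ)) h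
    simpa [denom_cocycle_σ, σ_of_det_pos hdet, denom_of_lower_left_eq_zero hg,
      denom_of_lower_left_eq_zero hg'] using hcocycle
  have hg'₁₁ : (g' 1 1 : ℂ) ≠ 0 := by
    exact_mod_cast right_ne_zero_of_mul (hdet' ▸ hdet.ne')
  have hγ := denom_ne_zero (γ : GL (Fin 2) ℝ) z
  have hγ' := denom_ne_zero (γ' : GL (Fin 2) ℝ) (g' • z)
  rw [slash_apply_of_det_pos hdet, denom_of_lower_left_eq_zero hg', hdet', D2, D2]
  simp only [Int.reduceSub, zpow_one, zpow_neg, ofReal_mul]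
  field_simp
  linear_combination (denom γ z : ℂ) * hentry + γ 1 0 * hdenom

/-- The twist of `E₂` by `g`. For integral upper triangular `g` of positive determinant, `E₂ ∣[2] g`
fails to be modular by the same term as `E₂`, so that the difference is a weight-two modular form
on a congruence subgroup. -/
def E2Twist (g : GL (Fin 2) ℝ) : ℍ → ℂ := E2 ∣[(2 : ℤ)] g - E2

theorem mdifferentiable_E2Twist (g : GL (Fin 2) ℝ) : MDiff (E2Twist g) :=
  (E2_mdifferentiable.slash 2 g).sub E2_mdifferentiable

theorem E2Twist_slash_of_mul_eq_mul {g g' : GL (Fin 2) ℝ} {γ γ' : SL(2, ℤ)}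
    (h : g * (γ : GL (Fin 2) ℝ) = (γ' : GL (Fin 2) ℝ) * g') (hg : g 1 0 = 0) (hg' : g' 1 0 = 0)
    (hdet : 0 < g'.det.val) : E2Twist g ∣[(2 : ℤ)] γ = E2Twist g' := by
  have hE2 : (E2 ∣[(2 : ℤ)] g) ∣[(2 : ℤ)] γ =
      E2 ∣[(2 : ℤ)] g' - (1 / (2 * riemannZeta 2)) • D2 γ := by
    rw [SL_slash, ← SlashAction.slash_mul, h, SlashAction.slash_mul, ← SL_slash, E2_slash_action,
      sub_eq_add_neg, SlashAction.add_slash, SlashAction.neg_slash, smul_slash,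
      D2_slash_of_mul_eq_mul h hg hg' hdet, σ_of_det_pos hdet, sub_eq_add_neg]
    rfl
  rw [E2Twist, sub_eq_add_neg, SlashAction.add_slash, SlashAction.neg_slash, hE2, E2_slash_action,
    E2Twist]
  abel

theorem tendsto_E2Twist_atImInfty {g : GL (Fin 2) ℝ} (hg : g 1 0 = 0) (hdet : 0 < g.det.val) :
    Tendsto (E2Twist g) atImInfty (𝓝 (g.det.val * (g 1 1 : ℂ) ^ (-2 : ℤ) - 1)) := by
  have hlim := ((tendsto_E2_atImInfty.comp (tendsto_smul_atImInfty hg)).mul_const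
    (g.det.val * (g 1 1 : ℂ) ^ (-2 : ℤ))).sub tendsto_E2_atImInfty
  rw [one_mul] at hlim
  refine hlim.congr fun z ↦ ?_
  rw [E2Twist, Pi.sub_apply, slash_apply_of_det_pos hdet, denom_of_lower_left_eq_zero hg,
    mul_assoc]
  norm_num

/-- The upper triangular representatives of the orbits of `SL(2, ℤ)`, acting from the left, on the
integral matrices of determinant `2`. -/
def levelTwoMatrix : Fin 3 → Matrix (Fin 2) (Fin 2) ℤ :=
  ![!![2, 0; 0, 1], !![1, 0; 0, 2], !![1, 1; 0, 2]]

theorem det_levelTwoMatrix (i : Fin 3) : (levelTwoMatrix i).det = 2 := by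
  fin_cases i <;> rfl

theorem det_levelTwoMatrix_map (i : Fin 3) :
    ((levelTwoMatrix i).map (Int.castRingHom ℝ)).det = 2 := by
  rw [← RingHom.mapMatrix_apply, ← RingHom.map_det, det_levelTwoMatrix, map_ofNat]

theorem levelTwoMatrix_one_zero (i : Fin 3) : levelTwoMatrix i 1 0 = 0 := by
  fin_cases i <;> rfl

theorem exists_levelTwoMatrix_mul_S (i : Fin 3) : ∃ γ : SL(2, ℤ),
    levelTwoMatrix i * ModularGroup.S = γ * levelTwoMatrix (Equiv.swap 0 1 i) := by
  fin_cases i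
  exacts [⟨ModularGroup.S, by decide⟩, ⟨ModularGroup.S, by decide⟩,
    ⟨⟨!![1, -1; 2, -1], rfl⟩, by decide⟩]

theorem exists_levelTwoMatrix_mul_T (i : Fin 3) : ∃ γ : SL(2, ℤ),
    levelTwoMatrix i * ModularGroup.T = γ * levelTwoMatrix (Equiv.swap 1 2 i) := by
  fin_cases i
  exacts [⟨ModularGroup.T ^ 2, by decide⟩, ⟨1, by decide⟩, ⟨ModularGroup.T, by decide⟩]

/-- `levelTwoMatrix i` as a real invertible matrix, so that it acts on functions on `ℍ`. -/
def levelTwoGL (i : Fin 3) : GL (Fin 2) ℝ :=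
  .mkOfDetNeZero ((levelTwoMatrix i).map (Int.castRingHom ℝ)) <|
    (det_levelTwoMatrix_map i).trans_ne two_ne_zero

theorem det_levelTwoGL (i : Fin 3) : (levelTwoGL i).det.val = 2 := det_levelTwoMatrix_map i

theorem levelTwoGL_one_zero (i : Fin 3) : levelTwoGL i 1 0 = 0 :=
  (congrArg (Int.cast : ℤ → ℝ) (levelTwoMatrix_one_zero i)).trans Int.cast_zero

theorem levelTwoGL_mul_eq_mul {i j : Fin 3} {γ γ' : SL(2, ℤ)}
    (h : levelTwoMatrix i * (γ : Matrix (Fin 2) (Fin 2) ℤ) = γ' * levelTwoMatrix j) :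
    levelTwoGL i * (γ : GL (Fin 2) ℝ) = (γ' : GL (Fin 2) ℝ) * levelTwoGL j := by
  have hmap := congrArg (Int.castRingHom ℝ).mapMatrix h
  rw [map_mul, map_mul] at hmap
  exact Units.ext hmap

/-- The three weight-two forms of level two attached to the matrices of determinant `2`. They are
`3 / (2 π²)` times the values of the Weierstrass `℘`-function at the half-periods, i.e. the roots of
`4 x³ - 3 E₄ x - E₆`. -/
def weierstrassRoot (i : Fin 3) : ℍ → ℂ := E2Twist (levelTwoGL i)

theorem mdifferentiable_weierstrassRoot (i : Fin 3) : MDiff (weierstrassRoot i) :=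
  mdifferentiable_E2Twist _

theorem weierstrassRoot_slash_of_mul_eq_mul {i j : Fin 3} {γ γ' : SL(2, ℤ)}
    (h : levelTwoMatrix i * (γ : Matrix (Fin 2) (Fin 2) ℤ) = γ' * levelTwoMatrix j) :
    weierstrassRoot i ∣[(2 : ℤ)] γ = weierstrassRoot j :=
  E2Twist_slash_of_mul_eq_mul (levelTwoGL_mul_eq_mul h) (levelTwoGL_one_zero i)
    (levelTwoGL_one_zero j) (det_levelTwoGL j ▸ two_pos)

theorem weierstrassRoot_slash_S (i : Fin 3) :
    weierstrassRoot i ∣[(2 : ℤ)] ModularGroup.S = weierstrassRoot (Equiv.swap 0 1 i) :=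
  (exists_levelTwoMatrix_mul_S i).elim fun _ ↦ weierstrassRoot_slash_of_mul_eq_mul

theorem weierstrassRoot_slash_T (i : Fin 3) :
    weierstrassRoot i ∣[(2 : ℤ)] ModularGroup.T = weierstrassRoot (Equiv.swap 1 2 i) :=
  (exists_levelTwoMatrix_mul_T i).elim fun _ ↦ weierstrassRoot_slash_of_mul_eq_mul

theorem tendsto_weierstrassRoot_atImInfty (i : Fin 3) :
    Tendsto (weierstrassRoot i) atImInfty (𝓝 (![1, -2⁻¹, -2⁻¹] i)) := by
  have hlim := tendsto_E2Twist_atImInfty (levelTwoGL_one_zero i) (det_levelTwoGL i ▸ two_pos)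
  have hentry : levelTwoGL i 1 1 = levelTwoMatrix i 1 1 := rfl
  rw [det_levelTwoGL, hentry] at hlim
  convert! hlim using 2
  fin_cases i <;> norm_num [levelTwoMatrix]

theorem pow_slash_SL2 {k : ℤ} (γ : SL(2, ℤ)) (F : ℍ → ℂ) (n : ℕ) :
    (F ^ n) ∣[n * k] γ = (F ∣[k] γ) ^ n := by
  induction n with
  | zero => simpa using is_invariant_one γ
  | succ n ih =>
    rw [pow_succ, pow_succ, ← ih, ← mul_slash_SL2]
    push_cast
    rw [add_one_mul]

theorem isLevelOneForm_sum_weierstrassRoot_pow (n : ℕ) :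
    IsLevelOneForm (n * 2) (1 + 2 * (-2⁻¹) ^ n) (∑ i, weierstrassRoot i ^ n) := by
  have hslash {γ : SL(2, ℤ)} {e : Equiv.Perm (Fin 3)}
      (h : ∀ i, weierstrassRoot i ∣[(2 : ℤ)] γ = weierstrassRoot (e i)) :
      (∑ i, weierstrassRoot i ^ n) ∣[(n * 2 : ℤ)] γ = ∑ i, weierstrassRoot i ^ n := by
    simp only [SlashAction.sum_slash, pow_slash_SL2, h]
    exact Equiv.sum_comp e (weierstrassRoot · ^ n)
  refine .of_S_T ?_ (hslash weierstrassRoot_slash_S) (hslash weierstrassRoot_slash_T) ?_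
  · exact .sum fun i _ ↦ (mdifferentiable_weierstrassRoot i).pow n
  · have hlim := tendsto_finsetSum Finset.univ fun i _ ↦
      (tendsto_weierstrassRoot_atImInfty i).pow n
    have hconst : ∑ i, (![1, -2⁻¹, -2⁻¹] i : ℂ) ^ n = 1 + 2 * (-2⁻¹) ^ n := by
      simp [Fin.sum_univ_three, two_mul, add_assoc]
    rw [hconst] at hlim
    exact hlim.congr fun z ↦ by simp only [Finset.sum_apply, Pi.pow_apply]

theorem sum_weierstrassRoot : ∑ i, weierstrassRoot i = 0 := by
  have hsum : IsLevelOneForm 2 0 (∑ i, weierstrassRoot i) := by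
    simpa using isLevelOneForm_sum_weierstrassRoot_pow 1
  exact hsum.eq_zero_of_weight_lt_twelve (by norm_num)

theorem sum_weierstrassRoot_sq : ∑ i, weierstrassRoot i ^ 2 = (3 / 2 : ℂ) • E₄ :=
  (isLevelOneForm_sum_weierstrassRoot_pow 2).eq_of_weight_lt_twelve
    (isLevelOneForm_E₄.const_smul _) (by norm_num) (by norm_num)

theorem sum_weierstrassRoot_cube : ∑ i, weierstrassRoot i ^ 3 = (3 / 4 : ℂ) • E₆ :=
  (isLevelOneForm_sum_weierstrassRoot_pow 3).eq_of_weight_lt_twelve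
    (isLevelOneForm_E₆.const_smul _) (by norm_num) (by norm_num)

theorem six_mul_prod_sub_of_add_eq_zero {R : Type*} [CommRing R] (a b c x : R) (h : a + b + c = 0) :
    6 * ((x - a) * (x - b) * (x - c)) =
      6 * x ^ 3 - 3 * (a ^ 2 + b ^ 2 + c ^ 2) * x - 2 * (a ^ 3 + b ^ 3 + c ^ 3) := by
  linear_combination (-6 * x ^ 2 + 3 * x * (a + b + c) + 2 * (a + b + c) ^ 2
    - 6 * (a * b + b * c + c * a)) * h

theorem E₆_eq_weierstrassRoot (i : Fin 3) :
    E₆ = (4 : ℂ) • weierstrassRoot i ^ 3 - (3 : ℂ) • (weierstrassRoot i * E₄) := by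
  ext z
  have h₁ := congrFun sum_weierstrassRoot z
  have h₂ := congrFun sum_weierstrassRoot_sq z
  have h₃ := congrFun sum_weierstrassRoot_cube z
  have hprod : ∏ j, (weierstrassRoot i z - weierstrassRoot j z) = 0 :=
    Finset.prod_eq_zero (Finset.mem_univ i) (sub_self _)
  simp only [Fin.sum_univ_three, Pi.add_apply, Pi.smul_apply, Pi.sub_apply, Pi.mul_apply,
    Pi.pow_apply, Pi.zero_apply, smul_eq_mul, Fin.prod_univ_three] at h₁ h₂ h₃ hprod ⊢
  have hnewton := six_mul_prod_sub_of_add_eq_zero _ _ _ (weierstrassRoot i z) h₁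
  rw [hprod, h₂, h₃] at hnewton
  linear_combination (2 / 3) * hnewton

/-- `F` is holomorphic on `ℍ` with normalized derivative `F'`, in analogy with `HasDerivAt`. -/
structure HasNormalizedDeriv (F F' : ℍ → ℂ) : Prop where
  mdifferentiable : MDiff F
  normalizedDeriv_eq : D F = F'

namespace HasNormalizedDeriv

variable {F F' G G' : ℍ → ℂ}

theorem add (hF : HasNormalizedDeriv F F') (hG : HasNormalizedDeriv G G') :
    HasNormalizedDeriv (F + G) (F' + G') where
  mdifferentiable := hF.mdifferentiable.add hG.mdifferentiable
  normalizedDeriv_eq := by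
    rw [normalizedDerivOfComplex_add _ _ hF.mdifferentiable hG.mdifferentiable,
      hF.normalizedDeriv_eq, hG.normalizedDeriv_eq]

theorem sub (hF : HasNormalizedDeriv F F') (hG : HasNormalizedDeriv G G') :
    HasNormalizedDeriv (F - G) (F' - G') where
  mdifferentiable := hF.mdifferentiable.sub hG.mdifferentiable
  normalizedDeriv_eq := by
    rw [normalizedDerivOfComplex_sub _ _ hF.mdifferentiable hG.mdifferentiable,
      hF.normalizedDeriv_eq, hG.normalizedDeriv_eq]

theorem mul (hF : HasNormalizedDeriv F F') (hG : HasNormalizedDeriv G G') :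
    HasNormalizedDeriv (F * G) (F' * G + F * G') where
  mdifferentiable := hF.mdifferentiable.mul hG.mdifferentiable
  normalizedDeriv_eq := by
    rw [normalizedDerivOfComplex_mul _ _ hF.mdifferentiable hG.mdifferentiable,
      hF.normalizedDeriv_eq, hG.normalizedDeriv_eq]

theorem const_smul (c : ℂ) (hF : HasNormalizedDeriv F F') :
    HasNormalizedDeriv (c • F) (c • F') where
  mdifferentiable := hF.mdifferentiable.const_smul c
  normalizedDeriv_eq := by
    rw [normalizedDerivOfComplex_smul _ _ hF.mdifferentiable, hF.normalizedDeriv_eq]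

theorem pow (hF : HasNormalizedDeriv F F') (n : ℕ) :
    HasNormalizedDeriv (F ^ n) ((n : ℂ) • (F ^ (n - 1) * F')) where
  mdifferentiable := hF.mdifferentiable.pow n
  normalizedDeriv_eq := by
    rw [normalizedDerivOfComplex_pow _ _ hF.mdifferentiable, hF.normalizedDeriv_eq, mul_assoc,
      ← nsmul_eq_mul, Nat.cast_smul_eq_nsmul]

end HasNormalizedDeriv

theorem hasNormalizedDeriv_E2 : HasNormalizedDeriv E2 ((12⁻¹ : ℂ) • (E2 ^ 2 - E₄)) :=
  ⟨E2_mdifferentiable, normalizedDerivOfComplex_E2⟩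

theorem hasNormalizedDeriv_E₄ : HasNormalizedDeriv E₄ ((3⁻¹ : ℂ) • (E2 * E₄ - E₆)) :=
  ⟨isLevelOneForm_E₄.mdifferentiable, normalizedDerivOfComplex_E₄⟩

theorem weierstrassRoot_mul_eq_zero (i : Fin 3) :
    ((4 : ℂ) • weierstrassRoot i ^ 2 - E₄) * ((6 : ℂ) • D (weierstrassRoot i) -
      (E2 * weierstrassRoot i - (2 : ℂ) • weierstrassRoot i ^ 2 + E₄)) = 0 := by
  have ha : HasNormalizedDeriv (weierstrassRoot i) _ := ⟨mdifferentiable_weierstrassRoot i, rfl⟩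
  have hcubic := (((ha.pow 3).const_smul 4).sub
    ((ha.mul hasNormalizedDeriv_E₄).const_smul 3)).normalizedDeriv_eq
  rw [← E₆_eq_weierstrassRoot i, normalizedDerivOfComplex_E₆] at hcubic
  ext z
  have hz := congrFun hcubic z
  have h₆ := congrFun (E₆_eq_weierstrassRoot i) z
  simp only [Pi.add_apply, Pi.smul_apply, Pi.sub_apply, Pi.mul_apply, Pi.pow_apply, Pi.zero_apply,
    Nat.cast_ofNat, smul_eq_mul] at hz h₆ ⊢
  rw [h₆] at hz
  linear_combination (-2) * hz

theorem four_smul_weierstrassRoot_zero_sq_ne_E₄ : (4 : ℂ) • weierstrassRoot 0 ^ 2 ≠ E₄ := by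
  intro h
  have hlim := ((tendsto_weierstrassRoot_atImInfty 0).pow 2).const_smul (4 : ℂ)
  have hconst := tendsto_nhds_unique (hlim.congr (congrFun h)) isLevelOneForm_E₄.tendsto
  norm_num at hconst

theorem hasNormalizedDeriv_weierstrassRoot_zero : HasNormalizedDeriv (weierstrassRoot 0)
    ((6⁻¹ : ℂ) • (E2 * weierstrassRoot 0 - (2 : ℂ) • weierstrassRoot 0 ^ 2 + E₄)) where
  mdifferentiable := mdifferentiable_weierstrassRoot 0
  normalizedDeriv_eq := by
    have ha := mdifferentiable_weierstrassRoot 0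
    have hE₄ := isLevelOneForm_E₄.mdifferentiable
    have hleft := ((ha.pow 2).const_smul (4 : ℂ)).sub hE₄
    have hright := ((normalizedDerivOfComplex_mdifferentiable ha).const_smul (6 : ℂ)).sub
      (((E2_mdifferentiable.mul ha).sub ((ha.pow 2).const_smul (2 : ℂ))).add hE₄)
    have hfactor := ((UpperHalfPlane.mul_eq_zero_iff hleft hright).mp
      (weierstrassRoot_mul_eq_zero 0)).resolve_left
        (sub_ne_zero.mpr four_smul_weierstrassRoot_zero_sq_ne_E₄)
    rw [← sub_eq_zero.mp hfactor, inv_smul_smul₀ (by norm_num)]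

theorem hasNormalizedDeriv_deriv_weierstrassRoot_zero :
    HasNormalizedDeriv (D (weierstrassRoot 0))
      ((24⁻¹ : ℂ) • (E2 ^ 2 * weierstrassRoot 0 - (4 : ℂ) • (E2 * weierstrassRoot 0 ^ 2)
        + weierstrassRoot 0 * E₄ + (2 : ℂ) • (E2 * E₄))) := by
  have ha := hasNormalizedDeriv_weierstrassRoot_zero
  rw [ha.normalizedDeriv_eq]
  convert! (((hasNormalizedDeriv_E2.mul ha).sub ((ha.pow 2).const_smul 2)).add
    hasNormalizedDeriv_E₄).const_smul 6⁻¹ using 1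
  rw [E₆_eq_weierstrassRoot 0]
  ext z
  simp only [Pi.sub_apply, Pi.smul_apply, Pi.mul_apply, smul_eq_mul, Pi.add_apply, Pi.pow_apply,
    Nat.cast_ofNat]
  ring

theorem normalizedDerivOfComplex_iterate_three_weierstrassRoot_zero :
    D^[3] (weierstrassRoot 0) =
      (72⁻¹ : ℂ) • (E2 ^ 3 * weierstrassRoot 0 - (6 : ℂ) • (E2 ^ 2 * weierstrassRoot 0 ^ 2)
        + (3 : ℂ) • (E2 * weierstrassRoot 0 * E₄) + (3 : ℂ) • (weierstrassRoot 0 ^ 2 * E₄)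
        + (3 : ℂ) • (E2 ^ 2 * E₄) - (4 : ℂ) • weierstrassRoot 0 ^ 4) := by
  have ha := hasNormalizedDeriv_weierstrassRoot_zero
  have hE2 := hasNormalizedDeriv_E2
  have hE₄ := hasNormalizedDeriv_E₄
  change D (D (D (weierstrassRoot 0))) = _
  rw [hasNormalizedDeriv_deriv_weierstrassRoot_zero.normalizedDeriv_eq,
    ((((((hE2.pow 2).mul ha).sub ((hE2.mul (ha.pow 2)).const_smul 4)).add (ha.mul hE₄)).add
      ((hE2.mul hE₄).const_smul 2)).const_smul 24⁻¹).normalizedDeriv_eq, E₆_eq_weierstrassRoot 0]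
  ext z
  simp only [Pi.sub_apply, Pi.smul_apply, Pi.mul_apply, smul_eq_mul, Pi.add_apply, Pi.pow_apply,
    Nat.cast_ofNat]
  ring

theorem nderiv_coe {G : ℂ → ℂ} {F : ℍ → ℂ} (h : ∀ z : ℍ, G z = F z) (z : ℍ) :
    nderiv G z = D F z := by
  have heq : G =ᶠ[𝓝 (z : ℂ)] F ∘ ofComplex := by
    filter_upwards [isOpen_upperHalfPlaneSet.mem_nhds z.im_pos] with w hw
    rw [Function.comp_apply, ofComplex_apply_of_im_pos hw, ← h]
  rw [nderiv, normalizedDerivOfComplex, heq.deriv_eq]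

theorem nderiv_iterate_coe {G : ℂ → ℂ} {F : ℍ → ℂ} (h : ∀ z : ℍ, G z = F z) (n : ℕ) (z : ℍ) :
    nderiv^[n] G z = D^[n] F z := by
  induction n generalizing G F with
  | zero => exact h z
  | succ _ ih => exact ih (nderiv_coe h)

theorem hasSum_lambert_E2 (z : ℍ) :
    HasSum (fun n : ℕ ↦ ((n : ℂ) + 1) * qq z ^ (n + 1) / (1 - qq z ^ (n + 1)))
      ((1 - E2 z) / 24) := by
  have hq : ‖qq z‖ < 1 := norm_exp_two_pi_I_lt_one z
  have hsummable : Summable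
      fun n : ℕ ↦ ((n : ℂ) + 1) * qq z ^ (n + 1) / (1 - qq z ^ (n + 1)) := by
    simpa using (summable_nat_add_iff 1).mpr
      (summable_norm_pow_mul_geometric_div_one_sub (𝕜 := ℂ) 1 hq)
  have hE2 : E2 z = 1 - 24 * ∑' n : ℕ, ((n : ℂ) + 1) * qq z ^ (n + 1) / (1 - qq z ^ (n + 1)) := by
    have h := E2_eq_tsum_cexp z
    rw [← qq, ← tsum_pow_div_one_sub_eq_tsum_sigma hq 1,
      tsum_pnat_eq_tsum_succ (f := fun n : ℕ ↦ (n : ℂ) ^ 1 * qq z ^ n / (1 - qq z ^ n))] at h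
    simpa using h
  rw [hsummable.hasSum_iff, hE2]
  ring

theorem coe_levelTwoGL_zero_smul (z : ℍ) : (↑(levelTwoGL 0 • z) : ℂ) = 2 * z := by
  rw [coe_smul_of_det_pos (det_levelTwoGL 0 ▸ two_pos),
    denom_of_lower_left_eq_zero (levelTwoGL_one_zero 0), num]
  simp [levelTwoGL, levelTwoMatrix, Matrix.GeneralLinearGroup.mkOfDetNeZero]

theorem weierstrassRoot_zero_apply (z : ℍ) :
    weierstrassRoot 0 z = 2 * E2 (levelTwoGL 0 • z) - E2 z := by
  rw [weierstrassRoot, E2Twist, Pi.sub_apply, slash_apply_of_det_pos (det_levelTwoGL 0 ▸ two_pos),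
    denom_of_lower_left_eq_zero (levelTwoGL_one_zero 0), det_levelTwoGL]
  simp [levelTwoGL, levelTwoMatrix, Matrix.GeneralLinearGroup.mkOfDetNeZero, mul_comm]

theorem div_one_add_eq_sub {K : Type*} [Field K] {x : K} (hx : 1 - x ≠ 0) (hx' : 1 + x ≠ 0) :
    x / (1 + x) = x / (1 - x) - 2 * (x ^ 2 / (1 - x ^ 2)) := by
  rw [show 1 - x ^ 2 = (1 - x) * (1 + x) by ring]
  field_simp
  ring

theorem EPt_coe (z : ℍ) : EPt z = weierstrassRoot 0 z := by
  have hqq : qq ↑(levelTwoGL 0 • z) = qq z ^ 2 := by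
    rw [qq, qq, coe_levelTwoGL_zero_smul, ← Complex.exp_nat_mul]
    push_cast
    ring_nf
  have hsum := (hasSum_lambert_E2 z).sub ((hasSum_lambert_E2 (levelTwoGL 0 • z)).mul_left 2)
  have hterm (n : ℕ) : ((n : ℂ) + 1) * qq z ^ (n + 1) / (1 - qq z ^ (n + 1)) -
      2 * (((n : ℂ) + 1) * qq ↑(levelTwoGL 0 • z) ^ (n + 1) /
        (1 - qq ↑(levelTwoGL 0 • z) ^ (n + 1))) =
      ((n : ℂ) + 1) * qq z ^ (n + 1) / (1 + qq z ^ (n + 1)) := by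
    have hlt : ‖qq z ^ (n + 1)‖ < 1 := by
      rw [norm_pow]
      exact pow_lt_one₀ (norm_nonneg _) (norm_exp_two_pi_I_lt_one z) n.succ_ne_zero
    have hsub : 1 - qq z ^ (n + 1) ≠ 0 := fun h ↦ by
      simp [← sub_eq_zero.mp h] at hlt
    have hadd : 1 + qq z ^ (n + 1) ≠ 0 := fun h ↦ by
      simp [← neg_eq_of_add_eq_zero_right h] at hlt
    rw [hqq, pow_right_comm, mul_div_assoc _ (qq z ^ (n + 1)) (1 + _),
      div_one_add_eq_sub hsub hadd]
    ring
  simp only [hterm] at hsum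
  rw [EPt, hsum.tsum_eq, weierstrassRoot_zero_apply]
  ring

end ThirdOrderODE

/-- The weight-two modular form `𝒫̃` on `Γ₀(2)` satisfies a third-order nonlinear ODE. -/
theorem EPt_third_order_ODE :
    ∀ τ : ℂ, 0 < τ.im →
      3 * EPt τ ^ 2 * (nderiv (nderiv (nderiv EPt)) τ) ^ 2 -
      36 * (EPt τ * nderiv EPt τ * nderiv (nderiv EPt) τ - (nderiv EPt τ) ^ 3) *
        nderiv (nderiv (nderiv EPt)) τ +
      32 * EPt τ * (nderiv (nderiv EPt) τ) ^ 3 -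
      3 * (12 * (nderiv EPt τ) ^ 2 + EPt τ ^ 4) * (nderiv (nderiv EPt) τ) ^ 2 +
      9 * EPt τ ^ 3 * (nderiv EPt τ) ^ 2 * nderiv (nderiv EPt) τ -
      (27 / 4) * EPt τ ^ 2 * (nderiv EPt τ) ^ 4 = 0 := by
  intro τ hτ
  have hiterate (n : ℕ) : nderiv^[n] EPt τ = _ := nderiv_iterate_coe EPt_coe n ⟨τ, hτ⟩
  have h₀ : EPt τ = _ := hiterate 0
  have h₁ : nderiv EPt τ = _ := (hiterate 1).trans
    (congrFun hasNormalizedDeriv_weierstrassRoot_zero.normalizedDeriv_eq _)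
  have h₂ : nderiv (nderiv EPt) τ = _ := (hiterate 2).trans
    (congrFun hasNormalizedDeriv_deriv_weierstrassRoot_zero.normalizedDeriv_eq _)
  have h₃ : nderiv (nderiv (nderiv EPt)) τ = _ := (hiterate 3).trans
    (congrFun normalizedDerivOfComplex_iterate_three_weierstrassRoot_zero _)
  rw [h₀, h₁, h₂, h₃]
  simp only [Function.iterate_zero_apply, Pi.add_apply, Pi.sub_apply, Pi.mul_apply, Pi.smul_apply,
    Pi.pow_apply, smul_eq_mul]
  ring
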